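/- arXiv:2312.11390 — 2 statements merged into one kernel-verified Lean document; each statement's English description precedes it below -/
import Mathlib

section
/- Let φ be a CNF formula with variables x_1,…,x_l and nonempty clauses c_1,…,c_m. Let G=(V,A,2) be the temporal graph with V = {x_1^p,…,x_l^p} ∪ {x_1^n,…,x_l^n} ∪ {y_1,…,y_l} ∪ {c_1,…,c_m} ∪ {r} and A consisting of: for each α∈{p,n} and i∈[l], the arcs (r,x_i^α,1,1), (r,x_i^α,2,2) and (x_i^α,y_i,1,1); the arc (x_i^p,c_j,1,1) for every clause c_j and variable x_i occurring positively in c_j; and the arc (x_i^n,c_j,1,1) for every clause c_j and variable x_i occurring negatively in c_j. Then φ is satisfiable if and only if there exists an LD-TOSS G'=(V,A',2) with root r of G such that |A'| ≤ 4l+m. -/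
open scoped Classical

universe u

/-- A temporal arc `(u, v, s, t)`: tail `u`, head `v`, starting time `s`, arrival time `t`. -/
abbrev TArc (α : Type u) := α × α × ℕ × ℕ

/-- The tail vertex of a temporal arc. -/
def TArc.tail {α : Type u} (a : TArc α) : α := a.1

/-- The head vertex of a temporal arc. -/
def TArc.head {α : Type u} (a : TArc α) : α := a.2.1

/-- The starting time of a temporal arc. -/
def TArc.ts {α : Type u} (a : TArc α) : ℕ := a.2.2.1

/-- The arrival time of a temporal arc. -/
def TArc.ta {α : Type u} (a : TArc α) : ℕ := a.2.2.2

/-- The elapsed time of a temporal arc. -/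
def TArc.el {α : Type u} (a : TArc α) : ℕ := TArc.ta a - TArc.ts a

/-- A temporal graph `(V, A, τ)`. -/
structure TempGraph (α : Type u) where
  V : Finset α
  A : Finset (TArc α)
  τ : ℕ
  nonempty : V.Nonempty
  valid : ∀ a ∈ A, TArc.tail a ∈ V ∧ TArc.head a ∈ V ∧ TArc.tail a ≠ TArc.head a ∧
      1 ≤ TArc.ts a ∧ TArc.ts a ≤ TArc.ta a ∧ TArc.ta a ≤ τ

variable {α : Type u}

/-- `IsWalk S u v L` : `L` is the list of arcs of a temporal `(u,v)`-walk using arcs from `S`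
(the trivial walk, `L = []`, requires `u = v`). -/
def IsWalk (S : Finset (TArc α)) : α → α → List (TArc α) → Prop
  | u, v, [] => u = v
  | u, v, a :: L => a ∈ S ∧ TArc.tail a = u ∧ (∀ b ∈ L.head?, TArc.ta a ≤ TArc.ts b) ∧
      IsWalk S (TArc.head a) v L

/-- The starting time of a walk (`0` for the trivial walk). -/
def tsW (L : List (TArc α)) : ℕ := (L.map TArc.ts).headI

/-- The arrival time of a walk (`0` for the trivial walk). -/
def taW (L : List (TArc α)) : ℕ := (L.map TArc.ta).getLastD 0

/-- The duration of a walk. -/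
def durW (L : List (TArc α)) : ℕ := taW L - tsW L

/-- The travelling time of a walk. -/
def ttW (L : List (TArc α)) : ℕ := (L.map TArc.el).sum

/-- The waiting time of a walk. -/
def waitW (L : List (TArc α)) : ℕ :=
  (List.zipWith (fun a b => TArc.ts b - TArc.ta a) L L.tail).sum

/-- The final vertex of a walk starting at `u` with arc list `L`. -/
def endv (u : α) (L : List (TArc α)) : α := (L.map TArc.head).getLastD u

/-- The sequence of vertices of a walk starting at `u` with arc list `L`. -/
def verts (u : α) (L : List (TArc α)) : List α := u :: L.map TArc.head

/-- A walk is a (temporal) path when its vertices are pairwise distinct. -/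
def IsPathList (u : α) (L : List (TArc α)) : Prop := (verts u L).Nodup

/-- The six optimisation criteria: earliest arrival, fastest time, latest departure,
minimum transfers, minimum waiting time, shortest travelling time. -/
inductive DistKind : Type
  | EA | FT | LD | MT | MW | ST
  deriving DecidableEq

/-- The value of a walk for each criterion. -/
def wval : DistKind → List (TArc α) → ℕ
  | .EA, L => taW L
  | .FT, L => durW L
  | .LD, L => tsW L
  | .MT, L => L.length
  | .MW, L => waitW L
  | .ST, L => ttW L

/-- `Realizes d S u v L` : `L` is a temporal `(u,v)`-walk within `S` attaining the optimum
(minimum, or maximum for `LD`) of the criterion `d` among all temporal `(u,v)`-walks in `S`. -/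
def Realizes (d : DistKind) (S : Finset (TArc α)) (u v : α) (L : List (TArc α)) : Prop :=
  IsWalk S u v L ∧ ∀ L', IsWalk S u v L' →
    if d = DistKind.LD then wval d L' ≤ wval d L else wval d L ≤ wval d L'

/-- The distance value `d_G(u,v) ∈ ℕ∞` (`+∞` when `v` is not temporally reachable from `u`;
`LD_G(u,u) = τ + 1`). -/
noncomputable def distVal (d : DistKind) (G : TempGraph α) (u v : α) : ℕ∞ :=
  if d = DistKind.LD then
    (if u = v then ((G.τ : ℕ∞) + 1)
     else if ∃ L, IsWalk G.A u v L then
       sSup {n : ℕ∞ | ∃ L, IsWalk G.A u v L ∧ n = (tsW L : ℕ∞)}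
     else ⊤)
  else sInf {n : ℕ∞ | ∃ L, IsWalk G.A u v L ∧ n = (wval d L : ℕ∞)}

/-- Every vertex of `Vs` is temporally reachable from `r` using arcs from `S`. -/
def ReachAll (S : Finset (TArc α)) (Vs : Finset α) (r : α) : Prop :=
  ∀ v ∈ Vs, ∃ L, IsWalk S r v L

/-- `B` is a temporal out-branching (TOB) with root `r`: its arc set is a minimal set of
temporal arcs such that every vertex of `B` is temporally reachable from `r`. -/
def IsTOB (B : TempGraph α) (r : α) : Prop :=
  r ∈ B.V ∧ ReachAll B.A B.V r ∧ ∀ S ⊂ B.A, ¬ ReachAll S B.V r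

/-- `B` is a temporal subgraph of `G`. -/
def IsSubgraph (B G : TempGraph α) : Prop :=
  B.V ⊆ G.V ∧ B.A ⊆ G.A ∧ B.τ ≤ G.τ

/-- `B` is a `d`-TOB of `G` rooted at `r`. -/
def IsDTOB (d : DistKind) (G B : TempGraph α) (r : α) : Prop :=
  IsTOB B r ∧ IsSubgraph B G ∧ ∀ v ∈ B.V, distVal d B r v = distVal d G r v

/-- `B` is a spanning `d`-TOB of `G` rooted at `r`. -/
def IsSpanningDTOB (d : DistKind) (G B : TempGraph α) (r : α) : Prop :=
  IsDTOB d G B r ∧ B.V = G.V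

/-- `B` is a maximum `d`-TOB of `G` rooted at `r`. -/
def IsMaxDTOB (d : DistKind) (G B : TempGraph α) (r : α) : Prop :=
  IsDTOB d G B r ∧ ∀ B', IsDTOB d G B' r → B'.V.card ≤ B.V.card

/-- The in-degree of `v` with respect to the arc set `S`. -/
noncomputable def inDeg (S : Finset (TArc α)) (v : α) : ℕ :=
  (S.filter fun a => TArc.head a = v).card

/-- A walk in a (static) digraph with arc set `E`. -/
def IsDWalk (E : Finset (α × α)) : α → α → List (α × α) → Prop
  | u, v, [] => u = v
  | u, v, e :: L => e ∈ E ∧ e.1 = u ∧ IsDWalk E e.2 v L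

/-- The digraph `(Vs, E)` is an out-branching with root `r`: every `v ∈ Vs` is the end of
a unique `(r,v)`-walk. -/
def IsOutBranching (Vs : Finset α) (E : Finset (α × α)) (r : α) : Prop :=
  ∀ v ∈ Vs, ∃! L, IsDWalk E r v L

/-- The arc of the underlying multidigraph corresponding to a temporal arc. -/
def proj (a : TArc α) : α × α := (TArc.tail a, TArc.head a)

/-- The temporal subgraph of `G` induced by a set of vertices `Z`. -/
noncomputable def induced (G : TempGraph α) (Z : Finset α) (hne : Z.Nonempty) (hZ : Z ⊆ G.V) :
    TempGraph α where
  V := Z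
  A := G.A.filter fun a => TArc.tail a ∈ Z ∧ TArc.head a ∈ Z
  τ := G.τ
  nonempty := hne
  valid := by
    intro a ha
    simp only [Finset.mem_filter] at ha
    obtain ⟨haA, h1, h2⟩ := ha
    obtain ⟨-, -, h3, h4, h5, h6⟩ := G.valid a haA
    exact ⟨h1, h2, h3, h4, h5, h6⟩

/-- The reverse of a temporal arc with respect to lifetime `τ`. -/
def TArc.rev (τ : ℕ) (a : TArc α) : TArc α :=
  (TArc.head a, TArc.tail a, τ + 1 - TArc.ta a, τ + 1 - TArc.ts a)

/-- The reverse of a temporal graph. -/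
noncomputable def TempGraph.rev (G : TempGraph α) : TempGraph α where
  V := G.V
  A := G.A.image (TArc.rev G.τ)
  τ := G.τ
  nonempty := G.nonempty
  valid := by
    intro b hb
    simp only [Finset.mem_image] at hb
    obtain ⟨a, ha, rfl⟩ := hb
    obtain ⟨h1, h2, h3, h4, h5, h6⟩ := G.valid a ha
    refine ⟨h2, h1, Ne.symm h3, ?_, ?_, ?_⟩ <;>
      simp only [TArc.rev, TArc.tail, TArc.head, TArc.ts, TArc.ta] at * <;> omega

/-- The reverse of a temporal walk. -/
def revWalk (τ : ℕ) (L : List (TArc α)) : List (TArc α) := (L.map (TArc.rev τ)).reverse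

/-- Every vertex of `Vs` temporally reaches `r` using arcs from `S`. -/
def CoReachAll (S : Finset (TArc α)) (Vs : Finset α) (r : α) : Prop :=
  ∀ v ∈ Vs, ∃ L, IsWalk S v r L

/-- `B` is a temporal in-branching (TIB) with root `r`. -/
def IsTIB (B : TempGraph α) (r : α) : Prop :=
  r ∈ B.V ∧ CoReachAll B.A B.V r ∧ ∀ S ⊂ B.A, ¬ CoReachAll S B.V r

/-- `B` is a `d`-TIB of `G` rooted at `r`. -/
def IsDTIB (d : DistKind) (G B : TempGraph α) (r : α) : Prop :=
  IsTIB B r ∧ IsSubgraph B G ∧ ∀ v ∈ B.V, distVal d B v r = distVal d G v r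

/-- `B` is a maximum `d`-TIB of `G` rooted at `r`. -/
def IsMaxDTIB (d : DistKind) (G B : TempGraph α) (r : α) : Prop :=
  IsDTIB d G B r ∧ ∀ B', IsDTIB d G B' r → B'.V.card ≤ B.V.card

/-- The reverse of a temporal subgraph, with respect to the ambient lifetime `τ`. -/
noncomputable def revSub (τ : ℕ) (B : TempGraph α) (h : B.τ ≤ τ) : TempGraph α where
  V := B.V
  A := B.A.image (TArc.rev τ)
  τ := τ
  nonempty := B.nonempty
  valid := by
    intro b hb
    simp only [Finset.mem_image] at hb
    obtain ⟨a, ha, rfl⟩ := hb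
    obtain ⟨h1, h2, h3, h4, h5, h6⟩ := B.valid a ha
    refine ⟨h2, h1, Ne.symm h3, ?_, ?_, ?_⟩ <;>
      simp only [TArc.rev, TArc.tail, TArc.head, TArc.ts, TArc.ta] at * <;> omega

/-- `L` (a walk from `u`) is `d`-prefix-optimal: every prefix of it realizes the distance `d`
from `u` to the end vertex of the prefix. -/
def PrefixOptimal (d : DistKind) (S : Finset (TArc α)) (u : α) (L : List (TArc α)) : Prop :=
  ∀ h ≤ L.length, Realizes d S u (endv u (L.take h)) (L.take h)

/-- `EAd_G(u,v)`: the minimum arrival time among the walks realizing `d_G(u,v)`. -/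
noncomputable def eaVal (d : DistKind) (G : TempGraph α) (u v : α) : ℕ∞ :=
  sInf {n : ℕ∞ | ∃ L, Realizes d G.A u v L ∧ n = (taW L : ℕ∞)}

/-- `G'` is a `d`-temporal out-spanning subgraph (d-TOSS) with root `r` of `G`. -/
def IsDTOSS (d : DistKind) (G G' : TempGraph α) (r : α) : Prop :=
  IsSubgraph G' G ∧ G'.V = G.V ∧
    ∀ v ∈ G.V, ∃ L, IsWalk G'.A r v L ∧ Realizes d G.A r v L

/-- Satisfiability of a CNF formula given by the positive/negative occurrence sets
of its clauses. -/
def Satisfiable (n m : ℕ) (pos neg : Fin m → Finset (Fin n)) : Prop :=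
  ∃ σ : Fin n → Bool, ∀ j : Fin m, (∃ i ∈ pos j, σ i = true) ∨ ∃ i ∈ neg j, σ i = false

/-- Vertex set of the reduction: `x_i^p`, `x_i^n`, `y_i`, clauses `c_j`, and the root `r`. -/
abbrev V18 (l m : ℕ) := Sum (Fin l) (Sum (Fin l) (Sum (Fin l) (Sum (Fin m) Unit)))

def xp18 (l m : ℕ) (i : Fin l) : V18 l m := Sum.inl i
def xn18 (l m : ℕ) (i : Fin l) : V18 l m := Sum.inr (Sum.inl i)
def y18 (l m : ℕ) (i : Fin l) : V18 l m := Sum.inr (Sum.inr (Sum.inl i))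
def c18 (l m : ℕ) (j : Fin m) : V18 l m := Sum.inr (Sum.inr (Sum.inr (Sum.inl j)))
def rt18 (l m : ℕ) : V18 l m := Sum.inr (Sum.inr (Sum.inr (Sum.inr ())))

/-- The temporal graph of the reduction of Theorem `thm:LD_min_hard` (elapsed time 0 case):
for each `α ∈ {p,n}` and `i`, the arcs `(r,x_i^α,1,1)`, `(r,x_i^α,2,2)`, `(x_i^α,y_i,1,1)`;
the arc `(x_i^p,c_j,1,1)` when `x_i` occurs positively in `c_j`, and `(x_i^n,c_j,1,1)` when
`x_i` occurs negatively in `c_j`; the lifetime is 2. -/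
noncomputable def G18 (l m : ℕ) (pos neg : Fin m → Finset (Fin l)) :
    TempGraph (V18 l m) where
  V := Finset.univ
  A :=
    (Finset.univ.image fun i : Fin l => ((rt18 l m, xp18 l m i, 1, 1) : TArc (V18 l m)))
    ∪ (Finset.univ.image fun i : Fin l => ((rt18 l m, xn18 l m i, 1, 1) : TArc (V18 l m)))
    ∪ (Finset.univ.image fun i : Fin l => ((rt18 l m, xp18 l m i, 2, 2) : TArc (V18 l m)))
    ∪ (Finset.univ.image fun i : Fin l => ((rt18 l m, xn18 l m i, 2, 2) : TArc (V18 l m)))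
    ∪ (Finset.univ.image fun i : Fin l => ((xp18 l m i, y18 l m i, 1, 1) : TArc (V18 l m)))
    ∪ (Finset.univ.image fun i : Fin l => ((xn18 l m i, y18 l m i, 1, 1) : TArc (V18 l m)))
    ∪ (Finset.univ.biUnion fun j : Fin m =>
        ((pos j).image fun i => ((xp18 l m i, c18 l m j, 1, 1) : TArc (V18 l m)))
        ∪ ((neg j).image fun i => ((xn18 l m i, c18 l m j, 1, 1) : TArc (V18 l m))))
  τ := 2
  nonempty := ⟨rt18 l m, Finset.mem_univ _⟩
  valid := by
    intro a ha
    simp only [Finset.mem_union, Finset.mem_image, Finset.mem_biUnion, Finset.mem_univ,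
      true_and] at ha
    rcases ha with ((((((⟨i, rfl⟩ | ⟨i, rfl⟩) | ⟨i, rfl⟩) | ⟨i, rfl⟩) | ⟨i, rfl⟩)
        | ⟨i, rfl⟩) | ⟨j, (⟨i, -, rfl⟩ | ⟨i, -, rfl⟩)⟩) <;>
      exact ⟨Finset.mem_univ _, Finset.mem_univ _,
        by simp [TArc.tail, TArc.head, xp18, xn18, y18, c18, rt18],
        by norm_num [TArc.ts], by norm_num [TArc.ts, TArc.ta], by norm_num [TArc.ta]⟩

/-- The vertex of the literal on the variable `x_i` with sign `b` (`true` for positive). -/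
def litVertex (l m : ℕ) (b : Bool) (i : Fin l) : V18 l m :=
  if b then xp18 l m i else xn18 l m i

/-- The variable `x_i` occurs with sign `b` in the clause `c_j`. -/
def Occurs {l m : ℕ} (pos neg : Fin m → Finset (Fin l)) (j : Fin m) (b : Bool) (i : Fin l) :
    Prop :=
  if b then i ∈ pos j else i ∈ neg j

section Reduction

variable {l m : ℕ} {pos neg : Fin m → Finset (Fin l)}

theorem litVertex_inj {b b' : Bool} {i i' : Fin l} :
    litVertex l m b i = litVertex l m b' i' ↔ b = b' ∧ i = i' := by
  cases b <;> cases b' <;> simp [litVertex, xp18, xn18]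

theorem litVertex_ne_rt18 (b : Bool) (i : Fin l) : litVertex l m b i ≠ rt18 l m := by
  cases b <;> simp [litVertex, xp18, xn18, rt18]

theorem litVertex_ne_y18 (b : Bool) (i i' : Fin l) : litVertex l m b i ≠ y18 l m i' := by
  cases b <;> simp [litVertex, xp18, xn18, y18]

theorem litVertex_ne_c18 (b : Bool) (i : Fin l) (j : Fin m) :
    litVertex l m b i ≠ c18 l m j := by
  cases b <;> simp [litVertex, xp18, xn18, c18]

theorem y18_ne_rt18 (i : Fin l) : y18 l m i ≠ rt18 l m := by simp [y18, rt18]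

theorem c18_ne_rt18 (j : Fin m) : c18 l m j ≠ rt18 l m := by simp [c18, rt18]

theorem c18_ne_y18 (j : Fin m) (i : Fin l) : c18 l m j ≠ y18 l m i := by simp [c18, y18]

theorem y18_inj {i i' : Fin l} : y18 l m i = y18 l m i' ↔ i = i' := by simp [y18]

theorem c18_inj {j j' : Fin m} : c18 l m j = c18 l m j' ↔ j = j' := by simp [c18]

theorem eq_litVertex_or (v : V18 l m) :
    (∃ b i, v = litVertex l m b i) ∨ (∃ i, v = y18 l m i) ∨ (∃ j, v = c18 l m j) ∨
      v = rt18 l m := by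
  rcases v with i | i | i | j | _
  · exact .inl ⟨true, i, rfl⟩
  · exact .inl ⟨false, i, rfl⟩
  · exact .inr (.inl ⟨i, rfl⟩)
  · exact .inr (.inr (.inl ⟨j, rfl⟩))
  · exact .inr (.inr (.inr rfl))

theorem mem_G18_A {a : TArc (V18 l m)} :
    a ∈ (G18 l m pos neg).A ↔
      (∃ b i, a = (rt18 l m, litVertex l m b i, 1, 1)) ∨
      (∃ b i, a = (rt18 l m, litVertex l m b i, 2, 2)) ∨
      (∃ b i, a = (litVertex l m b i, y18 l m i, 1, 1)) ∨
      ∃ j b i, Occurs pos neg j b i ∧ a = (litVertex l m b i, c18 l m j, 1, 1) := by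
  simp only [G18, Finset.mem_union, Finset.mem_image, Finset.mem_biUnion, Finset.mem_univ,
    true_and, Bool.exists_bool, litVertex, Occurs, if_true, Bool.false_eq_true, if_false,
    exists_or, eq_comm (a := a)]
  ac_nf

theorem IsWalk.eq_nil_of_no_tail {S : Finset (TArc α)} {u v : α}
    (hu : ∀ a ∈ S, TArc.tail a ≠ u) {L : List (TArc α)} (hL : IsWalk S u v L) :
    L = [] ∧ u = v := by
  cases L with
  | nil => exact ⟨rfl, hL⟩
  | cons a L => exact absurd hL.2.1 (hu a hL.1)

theorem G18_no_tail_y18 (i : Fin l) :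
    ∀ a ∈ (G18 l m pos neg).A, TArc.tail a ≠ y18 l m i := by
  intro a ha
  rcases mem_G18_A.1 ha with ⟨b, k, rfl⟩ | ⟨b, k, rfl⟩ | ⟨b, k, rfl⟩ | ⟨j, b, k, -, rfl⟩
  · exact (y18_ne_rt18 i).symm
  · exact (y18_ne_rt18 i).symm
  · exact litVertex_ne_y18 b k i
  · exact litVertex_ne_y18 b k i

theorem G18_no_tail_c18 (j : Fin m) :
    ∀ a ∈ (G18 l m pos neg).A, TArc.tail a ≠ c18 l m j := by
  intro a ha
  rcases mem_G18_A.1 ha with ⟨b, k, rfl⟩ | ⟨b, k, rfl⟩ | ⟨b, k, rfl⟩ | ⟨_, b, k, -, rfl⟩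
  · exact (c18_ne_rt18 j).symm
  · exact (c18_ne_rt18 j).symm
  · exact litVertex_ne_c18 b k j
  · exact litVertex_ne_c18 b k j

/-- Walks leaving a literal vertex have length at most one. -/
theorem IsWalk.cases_litVertex {S : Finset (TArc (V18 l m))}
    (hS : S ⊆ (G18 l m pos neg).A) {b : Bool} {i : Fin l} {v : V18 l m}
    {L : List (TArc (V18 l m))} (hL : IsWalk S (litVertex l m b i) v L) :
    (L = [] ∧ v = litVertex l m b i) ∨
    (v = y18 l m i ∧ (litVertex l m b i, y18 l m i, 1, 1) ∈ S ∧
      L = [(litVertex l m b i, y18 l m i, 1, 1)]) ∨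
    ∃ j, v = c18 l m j ∧ Occurs pos neg j b i ∧ (litVertex l m b i, c18 l m j, 1, 1) ∈ S ∧
      L = [(litVertex l m b i, c18 l m j, 1, 1)] := by
  cases L with
  | nil => exact .inl ⟨rfl, hL.symm⟩
  | cons a L =>
    obtain ⟨ha, ht, -, hw⟩ := hL
    rcases mem_G18_A.1 (hS ha) with ⟨b', k, rfl⟩ | ⟨b', k, rfl⟩ | ⟨b', k, rfl⟩ |
      ⟨j, b', k, ho, rfl⟩
    · exact absurd ht.symm (litVertex_ne_rt18 b i)
    · exact absurd ht.symm (litVertex_ne_rt18 b i)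
    · obtain ⟨rfl, rfl⟩ := litVertex_inj.1 ht
      obtain ⟨rfl, rfl⟩ := hw.eq_nil_of_no_tail fun a ha => G18_no_tail_y18 k a (hS ha)
      exact .inr (.inl ⟨rfl, ha, rfl⟩)
    · obtain ⟨rfl, rfl⟩ := litVertex_inj.1 ht
      obtain ⟨rfl, rfl⟩ := hw.eq_nil_of_no_tail fun a ha => G18_no_tail_c18 j a (hS ha)
      exact .inr (.inr ⟨j, rfl, ho, ha, rfl⟩)

/-- Walks leaving the root: trivial, one arc to a literal vertex, or two arcs at time `1`. -/
theorem IsWalk.cases_rt18 {S : Finset (TArc (V18 l m))}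
    (hS : S ⊆ (G18 l m pos neg).A) {v : V18 l m}
    {L : List (TArc (V18 l m))} (hL : IsWalk S (rt18 l m) v L) :
    (L = [] ∧ v = rt18 l m) ∨
    (∃ b i t, v = litVertex l m b i ∧ t ≤ 2 ∧ (rt18 l m, litVertex l m b i, t, t) ∈ S ∧
      L = [(rt18 l m, litVertex l m b i, t, t)]) ∨
    (∃ b i, v = y18 l m i ∧ (rt18 l m, litVertex l m b i, 1, 1) ∈ S ∧
      (litVertex l m b i, y18 l m i, 1, 1) ∈ S ∧ tsW L = 1) ∨
    ∃ j b i, v = c18 l m j ∧ Occurs pos neg j b i ∧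
      (rt18 l m, litVertex l m b i, 1, 1) ∈ S ∧
      (litVertex l m b i, c18 l m j, 1, 1) ∈ S ∧ tsW L = 1 := by
  cases L with
  | nil => exact .inl ⟨rfl, hL.symm⟩
  | cons a L =>
    obtain ⟨ha, ht, hc, hw⟩ := hL
    rcases mem_G18_A.1 (hS ha) with ⟨b, k, rfl⟩ | ⟨b, k, rfl⟩ | ⟨b, k, rfl⟩ | ⟨j, b, k, -, rfl⟩
    · rcases hw.cases_litVertex hS with ⟨rfl, rfl⟩ | ⟨rfl, h, rfl⟩ | ⟨j, rfl, ho, h, rfl⟩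
      · exact .inr (.inl ⟨b, k, 1, rfl, by norm_num, ha, rfl⟩)
      · exact .inr (.inr (.inl ⟨b, k, rfl, ha, h, rfl⟩))
      · exact .inr (.inr (.inr ⟨j, b, k, rfl, ho, ha, h, rfl⟩))
    · rcases hw.cases_litVertex hS with ⟨rfl, rfl⟩ | ⟨rfl, h, rfl⟩ | ⟨j, rfl, ho, h, rfl⟩
      · exact .inr (.inl ⟨b, k, 2, rfl, le_rfl, ha, rfl⟩)
      · exact absurd (hc _ rfl) (by simp [TArc.ta, TArc.ts])
      · exact absurd (hc _ rfl) (by simp [TArc.ta, TArc.ts])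
    · exact absurd ht (litVertex_ne_rt18 b k)
    · exact absurd ht (litVertex_ne_rt18 b k)

/-- An LD-TOSS contains every arc from the root at time `2`. -/
theorem IsDTOSS.mem_two {G' : TempGraph (V18 l m)}
    (h : IsDTOSS DistKind.LD (G18 l m pos neg) G' (rt18 l m)) (b : Bool) (i : Fin l) :
    (rt18 l m, litVertex l m b i, 2, 2) ∈ G'.A := by
  obtain ⟨L, hL, -, hmax⟩ := h.2.2 (litVertex l m b i) (Finset.mem_univ _)
  have h2 : 2 ≤ tsW L := by
    have := hmax [(rt18 l m, litVertex l m b i, 2, 2)]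
      ⟨mem_G18_A.2 (.inr (.inl ⟨b, i, rfl⟩)), rfl, by simp, rfl⟩
    simpa [wval, tsW, TArc.ts] using this
  rcases hL.cases_rt18 h.1.2.1 with ⟨-, hv⟩ | ⟨b', i', t, hv, ht, ha, rfl⟩ | ⟨_, i', hv, -⟩ |
    ⟨j, _, _, hv, -⟩
  · exact absurd hv (litVertex_ne_rt18 b i)
  · obtain ⟨rfl, rfl⟩ := litVertex_inj.1 hv
    have : t = 2 := le_antisymm ht h2
    rwa [this] at ha
  · exact absurd hv (litVertex_ne_y18 b i i')
  · exact absurd hv (litVertex_ne_c18 b i j)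

theorem IsDTOSS.exists_mem_y18 {G' : TempGraph (V18 l m)}
    (h : IsDTOSS DistKind.LD (G18 l m pos neg) G' (rt18 l m)) (i : Fin l) :
    ∃ b, (rt18 l m, litVertex l m b i, 1, 1) ∈ G'.A ∧
      (litVertex l m b i, y18 l m i, 1, 1) ∈ G'.A := by
  obtain ⟨L, hL, -⟩ := h.2.2 (y18 l m i) (Finset.mem_univ _)
  rcases hL.cases_rt18 h.1.2.1 with ⟨-, hv⟩ | ⟨b, i', -, hv, -⟩ | ⟨b, i', hv, h1, h2, -⟩ |
    ⟨j, _, _, hv, -⟩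
  · exact absurd hv (y18_ne_rt18 i)
  · exact absurd hv.symm (litVertex_ne_y18 b i' i)
  · obtain rfl := y18_inj.1 hv
    exact ⟨b, h1, h2⟩
  · exact absurd hv.symm (c18_ne_y18 j i)

theorem IsDTOSS.exists_mem_c18 {G' : TempGraph (V18 l m)}
    (h : IsDTOSS DistKind.LD (G18 l m pos neg) G' (rt18 l m)) (j : Fin m) :
    ∃ p : Bool × Fin l, Occurs pos neg j p.1 p.2 ∧
      (rt18 l m, litVertex l m p.1 p.2, 1, 1) ∈ G'.A ∧
      (litVertex l m p.1 p.2, c18 l m j, 1, 1) ∈ G'.A := by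
  obtain ⟨L, hL, -⟩ := h.2.2 (c18 l m j) (Finset.mem_univ _)
  rcases hL.cases_rt18 h.1.2.1 with ⟨-, hv⟩ | ⟨b, i, -, hv, -⟩ | ⟨_, i, hv, -⟩ |
    ⟨j', b, i, hv, ho, h1, h2, -⟩
  · exact absurd hv (c18_ne_rt18 j)
  · exact absurd hv.symm (litVertex_ne_c18 b i j)
  · exact absurd hv (c18_ne_y18 j i)
  · obtain rfl := c18_inj.1 hv
    exact ⟨(b, i), ho, h1, h2⟩

/-- The arcs determined by a choice `f` of a sign for each variable and a choice `g` of a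
literal for each clause. -/
def selectedArc (f : Fin l → Bool) (g : Fin m → Bool × Fin l) :
    (Bool × Fin l) ⊕ Fin l ⊕ Fin l ⊕ Fin m → TArc (V18 l m)
  | .inl p => (rt18 l m, litVertex l m p.1 p.2, 2, 2)
  | .inr (.inl i) => (rt18 l m, litVertex l m (f i) i, 1, 1)
  | .inr (.inr (.inl i)) => (litVertex l m (f i) i, y18 l m i, 1, 1)
  | .inr (.inr (.inr j)) => (litVertex l m (g j).1 (g j).2, c18 l m j, 1, 1)

theorem selectedArc_injective (f : Fin l → Bool) (g : Fin m → Bool × Fin l) :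
    Function.Injective (selectedArc f g) := by
  rintro (p | i | i | j) (p' | i' | i' | j') h <;>
    simp only [selectedArc, Prod.mk.injEq, litVertex_inj, y18_inj, c18_inj,
      litVertex_ne_rt18, (litVertex_ne_rt18 _ _).symm, litVertex_ne_y18, litVertex_ne_c18,
      c18_ne_y18, (c18_ne_y18 _ _).symm, OfNat.ofNat_ne_one, OfNat.one_ne_ofNat,
      and_false, false_and, and_true, true_and] at h
  · simp [Prod.ext_iff, h]
  · simp [h]
  · simp [h]
  · simp [h]

theorem card_selectedArc_index :
    Fintype.card ((Bool × Fin l) ⊕ Fin l ⊕ Fin l ⊕ Fin m) = 4 * l + m := by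
  simp only [Fintype.card_sum, Fintype.card_prod, Fintype.card_bool, Fintype.card_fin]
  ring

theorem selectedArc_mem_G18 (f : Fin l → Bool) {g : Fin m → Bool × Fin l}
    (hg : ∀ j, Occurs pos neg j (g j).1 (g j).2) (k : (Bool × Fin l) ⊕ Fin l ⊕ Fin l ⊕ Fin m) :
    selectedArc f g k ∈ (G18 l m pos neg).A := by
  rcases k with p | i | i | j
  · exact mem_G18_A.2 (.inr (.inl ⟨_, _, rfl⟩))
  · exact mem_G18_A.2 (.inl ⟨_, _, rfl⟩)
  · exact mem_G18_A.2 (.inr (.inr (.inl ⟨_, _, rfl⟩)))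
  · exact mem_G18_A.2 (.inr (.inr (.inr ⟨j, _, _, hg j, rfl⟩)))

theorem satisfiable_iff_exists_occurs :
    Satisfiable l m pos neg ↔ ∃ σ : Fin l → Bool, ∀ j, ∃ i, Occurs pos neg j (σ i) i := by
  refine exists_congr fun σ => forall_congr' fun j => ?_
  rw [← exists_or]
  refine exists_congr fun i => ?_
  cases h : σ i <;> simp [Occurs]

/-- The temporal subgraph of the selected arcs. -/
noncomputable def selectedGraph (f : Fin l → Bool) (g : Fin m → Bool × Fin l)
    (hg : ∀ j, Occurs pos neg j (g j).1 (g j).2) : TempGraph (V18 l m) where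
  V := Finset.univ
  A := Finset.univ.image (selectedArc f g)
  τ := 2
  nonempty := (G18 l m pos neg).nonempty
  valid := by
    intro a ha
    obtain ⟨k, -, rfl⟩ := Finset.mem_image.1 ha
    exact (G18 l m pos neg).valid _ (selectedArc_mem_G18 f hg k)

theorem selectedArc_mem_selectedGraph (f : Fin l → Bool) (g : Fin m → Bool × Fin l)
    (hg : ∀ j, Occurs pos neg j (g j).1 (g j).2)
    (k : (Bool × Fin l) ⊕ Fin l ⊕ Fin l ⊕ Fin m) :
    selectedArc f g k ∈ (selectedGraph f g hg).A :=
  Finset.mem_image_of_mem _ (Finset.mem_univ k)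

theorem IsWalk.mono {S T : Finset (TArc α)} (hST : S ⊆ T) {u v : α}
    {L : List (TArc α)} (h : IsWalk S u v L) : IsWalk T u v L := by
  induction L generalizing u with
  | nil => exact h
  | cons a L ih => exact ⟨hST h.1, h.2.1, h.2.2.1, ih h.2.2.2⟩

/-- Latest departure times from the root: at most `2`, and `2` only for literal vertices. -/
theorem IsWalk.tsW_le {v : V18 l m} {L : List (TArc (V18 l m))}
    (hL : IsWalk (G18 l m pos neg).A (rt18 l m) v L) :
    tsW L ≤ 2 ∧ ((∀ b i, v ≠ litVertex l m b i) → tsW L ≤ 1) ∧ (v = rt18 l m → tsW L = 0) := by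
  rcases hL.cases_rt18 (Finset.Subset.refl _) with ⟨rfl, -⟩ | ⟨b, i, t, rfl, ht, -, rfl⟩ |
    ⟨_, i, rfl, -, -, h⟩ | ⟨j, _, _, rfl, -, -, -, h⟩
  · simp [tsW]
  · exact ⟨ht, fun h => absurd rfl (h b i), fun h => absurd h (litVertex_ne_rt18 b i)⟩
  · exact ⟨by omega, fun _ => by omega, fun h => absurd h (y18_ne_rt18 i)⟩
  · exact ⟨by omega, fun _ => by omega, fun h => absurd h (c18_ne_rt18 j)⟩

theorem selectedGraph_isDTOSS (f : Fin l → Bool) (g : Fin m → Bool × Fin l)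
    (hg : ∀ j, Occurs pos neg j (g j).1 (g j).2) (hfg : ∀ j, (g j).1 = f (g j).2) :
    IsDTOSS DistKind.LD (G18 l m pos neg) (selectedGraph f g hg) (rt18 l m) := by
  have hsub : (selectedGraph f g hg).A ⊆ (G18 l m pos neg).A := by
    intro a ha
    obtain ⟨k, -, rfl⟩ := Finset.mem_image.1 ha
    exact selectedArc_mem_G18 f hg k
  have hmem := selectedArc_mem_selectedGraph f g hg
  refine ⟨⟨Finset.Subset.refl _, hsub, le_rfl⟩, rfl, fun v _ => ?_⟩
  suffices ∃ L, IsWalk (selectedGraph f g hg).A (rt18 l m) v L ∧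
      ∀ L', IsWalk (G18 l m pos neg).A (rt18 l m) v L' → tsW L' ≤ tsW L by
    obtain ⟨L, hL, hmax⟩ := this
    exact ⟨L, hL, hL.mono hsub, fun L' hL' => by simpa [wval] using hmax L' hL'⟩
  rcases eq_litVertex_or v with ⟨b, i, rfl⟩ | ⟨i, rfl⟩ | ⟨j, rfl⟩ | rfl
  · exact ⟨[selectedArc f g (.inl (b, i))], ⟨hmem _, rfl, by simp, rfl⟩,
      fun L' hL' => hL'.tsW_le.1⟩
  · exact ⟨[selectedArc f g (.inr (.inl i)), selectedArc f g (.inr (.inr (.inl i)))],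
      ⟨hmem _, rfl, by simp [selectedArc, TArc.ta, TArc.ts], hmem _, rfl, by simp, rfl⟩,
      fun L' hL' => hL'.tsW_le.2.1 fun b k => (litVertex_ne_y18 b k i).symm⟩
  · refine ⟨[selectedArc f g (.inr (.inl (g j).2)), selectedArc f g (.inr (.inr (.inr j)))],
      ⟨hmem _, rfl, by simp [selectedArc, TArc.ta, TArc.ts], hmem _, ?_, by simp, rfl⟩,
      fun L' hL' => hL'.tsW_le.2.1 fun b k => (litVertex_ne_c18 b k j).symm⟩
    simp [selectedArc, TArc.tail, TArc.head, hfg]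
  · exact ⟨[], rfl, fun L' hL' => (hL'.tsW_le.2.2 rfl).le⟩

theorem IsDTOSS.satisfiable {G' : TempGraph (V18 l m)}
    (h : IsDTOSS DistKind.LD (G18 l m pos neg) G' (rt18 l m))
    (hcard : G'.A.card ≤ 4 * l + m) : Satisfiable l m pos neg := by
  choose f hf1 hf2 using h.exists_mem_y18
  choose g hg hg1 hg2 using h.exists_mem_c18
  have hsub : Finset.univ.image (selectedArc f g) ⊆ G'.A := by
    intro a ha
    obtain ⟨p | i | i | j, -, rfl⟩ := Finset.mem_image.1 ha
    exacts [h.mem_two p.1 p.2, hf1 i, hf2 i, hg2 j]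
  have heq : Finset.univ.image (selectedArc f g) = G'.A := by
    refine Finset.eq_of_subset_of_card_le hsub ?_
    rwa [Finset.card_image_of_injective _ (selectedArc_injective f g), Finset.card_univ,
      card_selectedArc_index]
  refine satisfiable_iff_exists_occurs.2 ⟨f, fun j => ⟨(g j).2, ?_⟩⟩
  have hj := hg1 j
  rw [← heq] at hj
  obtain ⟨p | i | i | k, -, hk⟩ := Finset.mem_image.1 hj <;>
    simp only [selectedArc, Prod.mk.injEq] at hk
  · simp at hk
  · obtain ⟨h1, h2⟩ := litVertex_inj.1 hk.2.1
    subst h2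
    rw [h1]
    exact hg j
  · exact absurd hk.1 (litVertex_ne_rt18 _ _)
  · exact absurd hk.1 (litVertex_ne_rt18 _ _)

end Reduction

/-- Theorem `thm:LD_min_hard`, elapsed time 0 case: the CNF formula is
satisfiable iff the reduction graph has an LD-TOSS `G' = (V, A', 2)` with root `r` such that
`|A'| ≤ 4l + m`. -/
theorem stmt_18 (l m : ℕ) (pos neg : Fin m → Finset (Fin l))
    (hne : ∀ j, (pos j ∪ neg j).Nonempty) :
    Satisfiable l m pos neg ↔
      ∃ G' : TempGraph (V18 l m),
        IsDTOSS DistKind.LD (G18 l m pos neg) G' (rt18 l m) ∧ G'.τ = 2 ∧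
          G'.A.card ≤ 4 * l + m := by
  constructor
  · intro hsat
    obtain ⟨σ, hσ⟩ := satisfiable_iff_exists_occurs.1 hsat
    choose w hw using hσ
    refine ⟨selectedGraph σ (fun j => (σ (w j), w j)) hw,
      selectedGraph_isDTOSS _ _ hw fun _ => rfl, rfl, ?_⟩
    exact Finset.card_image_le.trans (Finset.card_univ.trans card_selectedArc_index).le
  · rintro ⟨G', h, -, hcard⟩
    exact h.satisfiable hcard
end

section
/- Let φ be a CNF formula with variables x_1,…,x_l and nonempty clauses c_1,…,c_m. Let G=(V,A,2) be the temporal graph with V = ⋃_{i∈[l]} {x_i^p, x_i^n, z_i^p, z_i^n, y_i} ∪ {c_1,…,c_m} ∪ {r} and A consisting of: for each α∈{p,n} and i∈[l], the arcs (r,x_i^α,2,2), (r,z_i^α,1,1), (z_i^α,x_i^α,1,1) and (x_i^α,y_i,1,1); the arc (x_i^p,c_j,1,1) for every clause c_j and variable x_i occurring positively in c_j; and the arc (x_i^n,c_j,1,1) for every clause c_j and variable x_i occurring negatively in c_j. Then φ is satisfiable if and only if there exists an MT-TOSS G'=(V,A',2) with root r of G such that |A'| ≤ 6l+m. -/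
open scoped Classical

universe u

variable {α : Type u}

/-- Vertex set of the reduction: `x_i^p`, `x_i^n`, `z_i^p`, `z_i^n`, `y_i`, clauses `c_j`,
and the root `r`. -/
abbrev V19 (l m : ℕ) :=
  Sum (Fin l) (Sum (Fin l) (Sum (Fin l) (Sum (Fin l) (Sum (Fin l) (Sum (Fin m) Unit)))))

def xp19 (l m : ℕ) (i : Fin l) : V19 l m := Sum.inl i
def xn19 (l m : ℕ) (i : Fin l) : V19 l m := Sum.inr (Sum.inl i)
def zp19 (l m : ℕ) (i : Fin l) : V19 l m := Sum.inr (Sum.inr (Sum.inl i))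
def zn19 (l m : ℕ) (i : Fin l) : V19 l m := Sum.inr (Sum.inr (Sum.inr (Sum.inl i)))
def y19 (l m : ℕ) (i : Fin l) : V19 l m := Sum.inr (Sum.inr (Sum.inr (Sum.inr (Sum.inl i))))
def c19 (l m : ℕ) (j : Fin m) : V19 l m :=
  Sum.inr (Sum.inr (Sum.inr (Sum.inr (Sum.inr (Sum.inl j)))))
def rt19 (l m : ℕ) : V19 l m :=
  Sum.inr (Sum.inr (Sum.inr (Sum.inr (Sum.inr (Sum.inr ())))))

/-- The temporal graph of the reduction of Theorem `thm:MT_min_hard` (elapsed time 0 case):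
for each `α ∈ {p,n}` and `i`, the arcs `(r,x_i^α,2,2)`, `(r,z_i^α,1,1)`, `(z_i^α,x_i^α,1,1)`,
`(x_i^α,y_i,1,1)`; the arc `(x_i^p,c_j,1,1)` when `x_i` occurs positively in `c_j`, and
`(x_i^n,c_j,1,1)` when `x_i` occurs negatively in `c_j`; the lifetime is 2. -/
noncomputable def G19 (l m : ℕ) (pos neg : Fin m → Finset (Fin l)) :
    TempGraph (V19 l m) where
  V := Finset.univ
  A :=
    (Finset.univ.image fun i : Fin l => ((rt19 l m, xp19 l m i, 2, 2) : TArc (V19 l m)))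
    ∪ (Finset.univ.image fun i : Fin l => ((rt19 l m, xn19 l m i, 2, 2) : TArc (V19 l m)))
    ∪ (Finset.univ.image fun i : Fin l => ((rt19 l m, zp19 l m i, 1, 1) : TArc (V19 l m)))
    ∪ (Finset.univ.image fun i : Fin l => ((rt19 l m, zn19 l m i, 1, 1) : TArc (V19 l m)))
    ∪ (Finset.univ.image fun i : Fin l => ((zp19 l m i, xp19 l m i, 1, 1) : TArc (V19 l m)))
    ∪ (Finset.univ.image fun i : Fin l => ((zn19 l m i, xn19 l m i, 1, 1) : TArc (V19 l m)))
    ∪ (Finset.univ.image fun i : Fin l => ((xp19 l m i, y19 l m i, 1, 1) : TArc (V19 l m)))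
    ∪ (Finset.univ.image fun i : Fin l => ((xn19 l m i, y19 l m i, 1, 1) : TArc (V19 l m)))
    ∪ (Finset.univ.biUnion fun j : Fin m =>
        ((pos j).image fun i => ((xp19 l m i, c19 l m j, 1, 1) : TArc (V19 l m)))
        ∪ ((neg j).image fun i => ((xn19 l m i, c19 l m j, 1, 1) : TArc (V19 l m))))
  τ := 2
  nonempty := ⟨rt19 l m, Finset.mem_univ _⟩
  valid := by
    intro a ha
    simp only [Finset.mem_union, Finset.mem_image, Finset.mem_biUnion, Finset.mem_univ,
      true_and] at ha
    rcases ha with ((((((((⟨i, rfl⟩ | ⟨i, rfl⟩) | ⟨i, rfl⟩) | ⟨i, rfl⟩) | ⟨i, rfl⟩)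
        | ⟨i, rfl⟩) | ⟨i, rfl⟩) | ⟨i, rfl⟩) | ⟨j, (⟨i, -, rfl⟩ | ⟨i, -, rfl⟩)⟩) <;>
      exact ⟨Finset.mem_univ _, Finset.mem_univ _,
        by simp [TArc.tail, TArc.head, xp19, xn19, zp19, zn19, y19, c19, rt19],
        by norm_num [TArc.ts], by norm_num [TArc.ts, TArc.ta], by norm_num [TArc.ta]⟩

/-- The vertices of the reduction graph, with the two polarities of a variable treated uniformly
(`true` is positive, `false` is negative). -/
inductive GadgetVertex (l m : ℕ) : Type
  | x (b : Bool) (i : Fin l)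
  | z (b : Bool) (i : Fin l)
  | y (i : Fin l)
  | c (j : Fin m)
  | r

namespace GadgetVertex

variable {l m : ℕ} {pos neg : Fin m → Finset (Fin l)}

/-- The vertex of `G19` represented by a gadget vertex. -/
def toV : GadgetVertex l m → V19 l m
  | x true i => xp19 l m i
  | x false i => xn19 l m i
  | z true i => zp19 l m i
  | z false i => zn19 l m i
  | y i => y19 l m i
  | c j => c19 l m j
  | r => rt19 l m

theorem toV_injective : Function.Injective (toV : GadgetVertex l m → V19 l m) := by
  rintro (⟨_ | _, i⟩ | ⟨_ | _, i⟩ | i | j | _) (⟨_ | _, i'⟩ | ⟨_ | _, i'⟩ | i' | j' | _) h <;>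
    simp_all [toV, xp19, xn19, zp19, zn19, y19, c19, rt19]

@[simp] theorem toV_inj {v w : GadgetVertex l m} : v.toV = w.toV ↔ v = w :=
  toV_injective.eq_iff

theorem toV_surjective : Function.Surjective (toV : GadgetVertex l m → V19 l m) := by
  rintro (i | i | i | i | i | j | ⟨⟩)
  exacts [⟨x true i, rfl⟩, ⟨x false i, rfl⟩, ⟨z true i, rfl⟩, ⟨z false i, rfl⟩, ⟨y i, rfl⟩,
    ⟨c j, rfl⟩, ⟨r, rfl⟩]

/-- The temporal arc between two gadget vertices with starting and arrival time `t`. -/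
def arc (v w : GadgetVertex l m) (t : ℕ) : TArc (V19 l m) := (v.toV, w.toV, t, t)

@[simp] theorem arc_inj {v w v' w' : GadgetVertex l m} {t t' : ℕ} :
    arc v w t = arc v' w' t' ↔ v = v' ∧ w = w' ∧ t = t' := by
  simp [arc]

@[simp] theorem tail_arc (v w : GadgetVertex l m) (t : ℕ) : TArc.tail (arc v w t) = v.toV := rfl
@[simp] theorem head_arc (v w : GadgetVertex l m) (t : ℕ) : TArc.head (arc v w t) = w.toV := rfl
@[simp] theorem ts_arc (v w : GadgetVertex l m) (t : ℕ) : TArc.ts (arc v w t) = t := rfl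
@[simp] theorem ta_arc (v w : GadgetVertex l m) (t : ℕ) : TArc.ta (arc v w t) = t := rfl

/-- The variable `i` occurs in the clause `j` with polarity `b`. -/
def Occurs (pos neg : Fin m → Finset (Fin l)) (b : Bool) (i : Fin l) (j : Fin m) : Prop :=
  i ∈ bif b then pos j else neg j

theorem satisfiable_iff : Satisfiable l m pos neg ↔
    ∃ σ : Fin l → Bool, ∀ j, ∃ i, Occurs pos neg (σ i) i j := by
  refine exists_congr fun σ => forall_congr' fun j => ?_
  rw [← exists_or]
  refine exists_congr fun i => ?_
  cases h : σ i <;> simp [Occurs]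

theorem mem_arcs_iff {a : TArc (V19 l m)} : a ∈ (G19 l m pos neg).A ↔
    (∃ b i, a = arc r (x b i) 2) ∨ (∃ b i, a = arc r (z b i) 1) ∨
    (∃ b i, a = arc (z b i) (x b i) 1) ∨ (∃ b i, a = arc (x b i) (y i) 1) ∨
    ∃ b i j, Occurs pos neg b i j ∧ a = arc (x b i) (c j) 1 := by
  simp only [G19, Finset.mem_union, Finset.mem_image, Finset.mem_biUnion, Finset.mem_univ,
    true_and, Bool.exists_bool, Occurs, arc, toV, cond_true, cond_false, eq_comm (a := a)]
  constructor
  · rintro ((((((((h | h) | h) | h) | h) | h) | h) | h) | ⟨j, ⟨i, h⟩ | ⟨i, h⟩⟩)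
    · exact .inl (.inr h)
    · exact .inl (.inl h)
    · exact .inr (.inl (.inr h))
    · exact .inr (.inl (.inl h))
    · exact .inr (.inr (.inl (.inr h)))
    · exact .inr (.inr (.inl (.inl h)))
    · exact .inr (.inr (.inr (.inl (.inr h))))
    · exact .inr (.inr (.inr (.inl (.inl h))))
    · exact .inr (.inr (.inr (.inr (.inr ⟨i, j, h⟩))))
    · exact .inr (.inr (.inr (.inr (.inl ⟨i, j, h⟩))))
  · rintro ((h | h) | (h | h) | (h | h) | (h | h) | ⟨i, j, h⟩ | ⟨i, j, h⟩)
    · simp only [h, true_or, or_true]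
    · simp only [h, true_or]
    · simp only [h, true_or, or_true]
    · simp only [h, true_or, or_true]
    · simp only [h, true_or, or_true]
    · simp only [h, true_or, or_true]
    · simp only [h, true_or, or_true]
    · simp only [h, true_or, or_true]
    · exact .inr ⟨j, .inr ⟨i, h⟩⟩
    · exact .inr ⟨j, .inl ⟨i, h⟩⟩

section Walks

variable {S : Finset (TArc (V19 l m))} {a : TArc (V19 l m)} {v : GadgetVertex l m}
  {L : List (TArc (V19 l m))} {b : Bool} {i : Fin l}

theorem tail_eq_r (ha : a ∈ (G19 l m pos neg).A) (h : TArc.tail a = toV r) :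
    ∃ b i, a = arc r (x b i) 2 ∨ a = arc r (z b i) 1 := by
  rcases mem_arcs_iff.1 ha with ⟨b, i, rfl⟩ | ⟨b, i, rfl⟩ | ⟨b, i, rfl⟩ | ⟨b, i, rfl⟩ |
    ⟨b, i, j, -, rfl⟩ <;> simp at h ⊢

theorem tail_eq_z (ha : a ∈ (G19 l m pos neg).A) (h : TArc.tail a = toV (z b i)) :
    a = arc (z b i) (x b i) 1 := by
  rcases mem_arcs_iff.1 ha with ⟨b, i, rfl⟩ | ⟨b, i, rfl⟩ | ⟨b, i, rfl⟩ | ⟨b, i, rfl⟩ |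
    ⟨b, i, j, -, rfl⟩ <;> simp at h ⊢
  exact h

theorem tail_eq_x (ha : a ∈ (G19 l m pos neg).A) (h : TArc.tail a = toV (x b i)) :
    a = arc (x b i) (y i) 1 ∨ ∃ j, Occurs pos neg b i j ∧ a = arc (x b i) (c j) 1 := by
  rcases mem_arcs_iff.1 ha with ⟨b, i, rfl⟩ | ⟨b, i, rfl⟩ | ⟨b, i, rfl⟩ | ⟨b, i, rfl⟩ |
    ⟨b, i, j, hj, rfl⟩ <;> simp at h ⊢
  · exact h
  · obtain ⟨rfl, rfl⟩ := h
    exact ⟨hj, rfl, rfl⟩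

theorem tail_ne_y (ha : a ∈ (G19 l m pos neg).A) : TArc.tail a ≠ toV (y i) := by
  rcases mem_arcs_iff.1 ha with ⟨b, i, rfl⟩ | ⟨b, i, rfl⟩ | ⟨b, i, rfl⟩ | ⟨b, i, rfl⟩ |
    ⟨b, i, j, -, rfl⟩ <;> simp

theorem tail_ne_c (ha : a ∈ (G19 l m pos neg).A) (j : Fin m) : TArc.tail a ≠ toV (c j) := by
  rcases mem_arcs_iff.1 ha with ⟨b, i, rfl⟩ | ⟨b, i, rfl⟩ | ⟨b, i, rfl⟩ | ⟨b, i, rfl⟩ |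
    ⟨b, i, j, -, rfl⟩ <;> simp

/-- The possible walks from the root of the reduction graph. -/
inductive RootWalk (pos neg : Fin m → Finset (Fin l)) (S : Finset (TArc (V19 l m))) :
    GadgetVertex l m → List (TArc (V19 l m)) → Prop
  | nil : RootWalk pos neg S r []
  | direct {b : Bool} {i : Fin l} : arc r (x b i) 2 ∈ S → RootWalk pos neg S (x b i)
      [arc r (x b i) 2]
  | toZ {b : Bool} {i : Fin l} : arc r (z b i) 1 ∈ S → RootWalk pos neg S (z b i)
      [arc r (z b i) 1]
  | viaZ {b : Bool} {i : Fin l} : RootWalk pos neg S (x b i)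
      [arc r (z b i) 1, arc (z b i) (x b i) 1]
  | toY {b : Bool} {i : Fin l} : arc (z b i) (x b i) 1 ∈ S → arc (x b i) (y i) 1 ∈ S →
      RootWalk pos neg S (y i)
      [arc r (z b i) 1, arc (z b i) (x b i) 1, arc (x b i) (y i) 1]
  | toC {b : Bool} {i : Fin l} {j : Fin m} : Occurs pos neg b i j →
      arc (z b i) (x b i) 1 ∈ S → arc (x b i) (c j) 1 ∈ S → RootWalk pos neg S (c j)
      [arc r (z b i) 1, arc (z b i) (x b i) 1, arc (x b i) (c j) 1]

theorem _root_.IsWalk.rootWalk (hS : S ⊆ (G19 l m pos neg).A) (h : IsWalk S (toV r) v.toV L) :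
    RootWalk pos neg S v L := by
  rcases L with _ | ⟨a₁, L⟩
  · simp only [IsWalk, toV_inj] at h
    subst h
    exact .nil
  obtain ⟨h₁, ht, hnext, h⟩ := h
  obtain ⟨b, i, rfl | rfl⟩ := tail_eq_r (hS h₁) ht
  · rcases L with _ | ⟨a₂, L⟩
    · simp only [IsWalk, head_arc, toV_inj] at h
      subst h
      exact .direct h₁
    · obtain ⟨h₂, ht, -, -⟩ := h
      rcases tail_eq_x (hS h₂) ht with rfl | ⟨j, -, rfl⟩ <;> simp at hnext
  rcases L with _ | ⟨a₂, L⟩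
  · simp only [IsWalk, head_arc, toV_inj] at h
    subst h
    exact .toZ h₁
  obtain ⟨h₂, ht, -, h⟩ := h
  obtain rfl := tail_eq_z (hS h₂) ht
  rcases L with _ | ⟨a₃, L⟩
  · simp only [IsWalk, head_arc, toV_inj] at h
    subst h
    exact .viaZ
  obtain ⟨h₃, ht, -, h⟩ := h
  rcases tail_eq_x (hS h₃) ht with rfl | ⟨j, hj, rfl⟩ <;> rcases L with _ | ⟨a₄, L⟩
  · simp only [IsWalk, head_arc, toV_inj] at h
    subst h
    exact .toY h₂ h₃
  · exact absurd h.2.1 (tail_ne_y (hS h.1))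
  · simp only [IsWalk, head_arc, toV_inj] at h
    subst h
    exact .toC hj h₂ h₃
  · exact absurd h.2.1 (tail_ne_c (hS h.1) j)

end Walks

/-- Index type of the arcs of a smallest MT-TOSS. -/
abbrev ArcIndex (l m : ℕ) := (Bool × Fin l) ⊕ (Bool × Fin l) ⊕ Fin l ⊕ Fin l ⊕ Fin m

/-- The arcs from the root, the arcs towards `y_i` through the side `σ i`, and for each clause an
arc from the `x`-vertex `e j`. -/
def selectedArc (σ : Fin l → Bool) (e : Fin m → Bool × Fin l) : ArcIndex l m → TArc (V19 l m)
  | .inl (b, i) => arc r (x b i) 2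
  | .inr (.inl (b, i)) => arc r (z b i) 1
  | .inr (.inr (.inl i)) => arc (z (σ i) i) (x (σ i) i) 1
  | .inr (.inr (.inr (.inl i))) => arc (x (σ i) i) (y i) 1
  | .inr (.inr (.inr (.inr j))) => arc (x (e j).1 (e j).2) (c j) 1

theorem card_arcIndex : Fintype.card (ArcIndex l m) = 6 * l + m := by
  simp only [Fintype.card_sum, Fintype.card_prod, Fintype.card_bool, Fintype.card_fin]
  omega

theorem selectedArc_injective (σ : Fin l → Bool) (e : Fin m → Bool × Fin l) :
    Function.Injective (selectedArc σ e) := by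
  rintro (⟨b, i⟩ | ⟨b, i⟩ | i | i | j) (⟨b', i'⟩ | ⟨b', i'⟩ | i' | i' | j') h <;>
    simp_all [selectedArc]

theorem zx_mem_selected {σ : Fin l → Bool} {e : Fin m → Bool × Fin l} {b : Bool} {i : Fin l}
    (h : arc (z b i) (x b i) 1 ∈ Finset.univ.image (selectedArc σ e)) : b = σ i := by
  simp only [Finset.mem_image, Finset.mem_univ, true_and] at h
  obtain ⟨⟨b', i'⟩ | ⟨b', i'⟩ | i' | i' | j', h⟩ := h <;> simp [selectedArc] at h
  obtain ⟨rfl, rfl⟩ := h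
  rfl

theorem selected_subset {σ : Fin l → Bool} {e : Fin m → Bool × Fin l}
    (he : ∀ j, Occurs pos neg (e j).1 (e j).2 j) :
    Finset.univ.image (selectedArc σ e) ⊆ (G19 l m pos neg).A := by
  intro a ha
  simp only [Finset.mem_image, Finset.mem_univ, true_and] at ha
  rw [mem_arcs_iff]
  obtain ⟨⟨b, i⟩ | ⟨b, i⟩ | i | i | j, rfl⟩ := ha
  · exact .inl ⟨b, i, rfl⟩
  · exact .inr (.inl ⟨b, i, rfl⟩)
  · exact .inr (.inr (.inl ⟨_, i, rfl⟩))
  · exact .inr (.inr (.inr (.inl ⟨_, i, rfl⟩)))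
  · exact .inr (.inr (.inr (.inr ⟨_, _, j, he j, rfl⟩)))

theorem _root_.IsWalk.mono_s19 {α : Type*} {S T : Finset (TArc α)} (hST : S ⊆ T) {u v : α}
    {L : List (TArc α)} (h : IsWalk S u v L) : IsWalk T u v L := by
  induction L generalizing u with
  | nil => exact h
  | cons a L ih => exact ⟨hST h.1, h.2.1, h.2.2.1, ih h.2.2.2⟩

theorem exists_toss_of_satisfiable (h : Satisfiable l m pos neg) :
    ∃ G' : TempGraph (V19 l m), IsDTOSS DistKind.MT (G19 l m pos neg) G' (rt19 l m) ∧
      G'.τ = 2 ∧ G'.A.card ≤ 6 * l + m := by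
  obtain ⟨σ, hσ⟩ := satisfiable_iff.1 h
  choose i hi using hσ
  set f := selectedArc σ fun j => (σ (i j), i j)
  have hsub : Finset.univ.image f ⊆ (G19 l m pos neg).A := selected_subset hi
  have hmem (k) : f k ∈ Finset.univ.image f := Finset.mem_image_of_mem f (Finset.mem_univ k)
  refine ⟨⟨Finset.univ, Finset.univ.image f, 2, ⟨rt19 l m, Finset.mem_univ _⟩,
    fun a ha => (G19 l m pos neg).valid a (hsub ha)⟩, ⟨⟨subset_rfl, hsub, le_rfl⟩, rfl, ?_⟩, rfl,
    Finset.card_image_le.trans_eq card_arcIndex⟩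
  intro v _
  obtain ⟨v, rfl⟩ := toV_surjective v
  suffices ∃ L, IsWalk (Finset.univ.image f) (toV r) v.toV L ∧
      ∀ L', IsWalk (G19 l m pos neg).A (toV r) v.toV L' → L.length ≤ L'.length by
    obtain ⟨L, hL, hmin⟩ := this
    exact ⟨L, hL, hL.mono_s19 hsub, by simpa [wval, toV] using hmin⟩
  have hrx (b k) : arc r (x b k) 2 ∈ Finset.univ.image f := hmem (.inl (b, k))
  have hrz (b k) : arc r (z b k) 1 ∈ Finset.univ.image f := hmem (.inr (.inl (b, k)))
  have hzx (k) : arc (z (σ k) k) (x (σ k) k) 1 ∈ Finset.univ.image f :=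
    hmem (.inr (.inr (.inl k)))
  have hxy (k) : arc (x (σ k) k) (y k) 1 ∈ Finset.univ.image f :=
    hmem (.inr (.inr (.inr (.inl k))))
  have hxc (j) : arc (x (σ (i j)) (i j)) (c j) 1 ∈ Finset.univ.image f :=
    hmem (.inr (.inr (.inr (.inr j))))
  rcases v with ⟨b, k⟩ | ⟨b, k⟩ | k | j | _
  · refine ⟨[arc r (x b k) 2], by simp [IsWalk, hrx, -Finset.mem_image], fun L' hL' => ?_⟩
    cases hL'.rootWalk subset_rfl <;> simp
  · refine ⟨[arc r (z b k) 1], by simp [IsWalk, hrz, -Finset.mem_image], fun L' hL' => ?_⟩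
    cases hL'.rootWalk subset_rfl
    simp
  · refine ⟨[arc r (z (σ k) k) 1, arc (z (σ k) k) (x (σ k) k) 1, arc (x (σ k) k) (y k) 1],
      by simp [IsWalk, hrz, hzx, hxy, -Finset.mem_image], fun L' hL' => ?_⟩
    cases hL'.rootWalk subset_rfl
    simp
  · refine ⟨[arc r (z (σ (i j)) (i j)) 1, arc (z (σ (i j)) (i j)) (x (σ (i j)) (i j)) 1,
      arc (x (σ (i j)) (i j)) (c j) 1],
      by simp [IsWalk, hrz, hzx, hxc, -Finset.mem_image], fun L' hL' => ?_⟩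
    cases hL'.rootWalk subset_rfl
    simp
  · exact ⟨[], rfl, fun _ _ => Nat.zero_le _⟩

theorem satisfiable_of_toss {G' : TempGraph (V19 l m)}
    (hG' : IsDTOSS DistKind.MT (G19 l m pos neg) G' (rt19 l m)) (hcard : G'.A.card ≤ 6 * l + m) :
    Satisfiable l m pos neg := by
  obtain ⟨⟨-, hsub, -⟩, -, hwalk⟩ := hG'
  have hroot (v : GadgetVertex l m) : ∃ L, RootWalk pos neg G'.A v L ∧
      ∀ L', IsWalk (G19 l m pos neg).A (toV r) v.toV L' → L.length ≤ L'.length := by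
    obtain ⟨L, hL, -, hmin⟩ := hwalk v.toV (Finset.mem_univ _)
    exact ⟨L, hL.rootWalk hsub, by simpa [wval, toV] using hmin⟩
  have hrx (b i) : arc r (x b i) 2 ∈ G'.A := by
    obtain ⟨L, hL, hmin⟩ := hroot (x b i)
    have h1 := hmin [arc r (x b i) 2] ⟨mem_arcs_iff.2 (.inl ⟨b, i, rfl⟩), by simp [IsWalk]⟩
    cases hL with
    | direct h => exact h
    | viaZ => simp at h1
  have hrz (b i) : arc r (z b i) 1 ∈ G'.A := by
    obtain ⟨L, hL, -⟩ := hroot (z b i)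
    cases hL with
    | toZ h => exact h
  have hy (i) : ∃ b, arc (z b i) (x b i) 1 ∈ G'.A ∧ arc (x b i) (y i) 1 ∈ G'.A := by
    obtain ⟨L, hL, -⟩ := hroot (y i)
    cases hL with
    | toY h h' => exact ⟨_, h, h'⟩
  have hc (j) : ∃ e : Bool × Fin l, Occurs pos neg e.1 e.2 j ∧
      arc (z e.1 e.2) (x e.1 e.2) 1 ∈ G'.A ∧ arc (x e.1 e.2) (c j) 1 ∈ G'.A := by
    obtain ⟨L, hL, -⟩ := hroot (c j)
    cases hL with
    | toC ho h h' => exact ⟨(_, _), ho, h, h'⟩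
  choose σ hzx hxy using hy
  choose e ho hzxe hxc using hc
  have himage : Finset.univ.image (selectedArc σ e) = G'.A := by
    refine Finset.eq_of_subset_of_card_le ?_ ?_
    · intro a ha
      simp only [Finset.mem_image, Finset.mem_univ, true_and] at ha
      obtain ⟨⟨b, i⟩ | ⟨b, i⟩ | i | i | j, rfl⟩ := ha
      exacts [hrx b i, hrz b i, hzx i, hxy i, hxc j]
    · rw [Finset.card_image_of_injective _ (selectedArc_injective σ e), Finset.card_univ,
        card_arcIndex]
      exact hcard
  refine satisfiable_iff.2 ⟨σ, fun j => ⟨(e j).2, ?_⟩⟩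
  have hside : (e j).1 = σ (e j).2 := zx_mem_selected (himage.symm ▸ hzxe j)
  rw [← hside]
  exact ho j

end GadgetVertex

/-- Theorem `thm:MT_min_hard`, elapsed time 0 case: the CNF formula is
satisfiable iff the reduction graph has an MT-TOSS `G' = (V, A', 2)` with root `r` such that
`|A'| ≤ 6l + m`. -/
theorem stmt_19 (l m : ℕ) (pos neg : Fin m → Finset (Fin l))
    (hne : ∀ j, (pos j ∪ neg j).Nonempty) :
    Satisfiable l m pos neg ↔
      ∃ G' : TempGraph (V19 l m),
        IsDTOSS DistKind.MT (G19 l m pos neg) G' (rt19 l m) ∧ G'.τ = 2 ∧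
          G'.A.card ≤ 6 * l + m := by
  exact ⟨GadgetVertex.exists_toss_of_satisfiable,
    fun ⟨_, hG', _, hcard⟩ => GadgetVertex.satisfiable_of_toss hG' hcard⟩
end
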